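/- arXiv:2311.12178 — 7 statements merged into one kernel-verified Lean document; each statement's English description precedes it below -/
import Mathlib

section
/- Let (L,[-,-]) be a Leibniz algebra over a field K. Then the trilinear bracket {x,y,z} := [x,[y,z]] makes L into a ternary Leibniz algebra, i.e. {{x,y,z},t,u} = {x,y,{z,t,u}} + {x,{y,t,u},z} + {{x,t,u},y,z} for all x,y,z,t,u ∈ L. -/
variable {K : Type*} [Field K] {L : Type*} [AddCommGroup L] [Module K L]

/-- The (right) Leibniz identity for a binary bracket. -/
def LeibnizId (b : L → L → L) : Prop :=
  ∀ x y z : L, b (b x y) z = b x (b y z) + b (b x z) y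

/-- The (right) ternary Leibniz identity for a ternary bracket. -/
def TernaryLeibnizId (b : L → L → L → L) : Prop :=
  ∀ x y z t u : L,
    b (b x y z) t u = b x y (b z t u) + b x (b y t u) z + b (b x t u) y z

/-- Let `(L, [-,-])` be a Leibniz algebra over a field `K`. Then the trilinear bracket
`{x,y,z} := [x,[y,z]]` makes `L` into a ternary Leibniz algebra. -/
theorem leibniz_to_ternaryLeibniz (b : L →ₗ[K] L →ₗ[K] L)
    (hb : LeibnizId fun x y => b x y) :
    TernaryLeibnizId fun x y z : L => b x (b y z) := by
  intro x y z t u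
  have h1 : b (b x (b y z)) (b t u) = b x (b (b y z) (b t u)) + b (b x (b t u)) (b y z) :=
    hb x (b y z) (b t u)
  have h2 : b (b y z) (b t u) = b y (b z (b t u)) + b (b y (b t u)) z := hb y z (b t u)
  show b (b x (b y z)) (b t u) =
    b x (b y (b z (b t u))) + b x (b (b y (b t u)) z) + b (b x (b t u)) (b y z)
  rw [h1, h2, map_add]
end

section
/- Let (L,[-,-]) be a Leibniz algebra over a field K and let β₁, β₂ : L → L be two injective averaging operators on L that commute (β₁∘β₂ = β₂∘β₁) and are compatible, i.e. [β₂([β₁(x),y]),z] + [β₁([β₂(x),y]),z] = [[β₁(x),β₂(y)],z] + [[β₂(x),β₁(y)],z] for all x,y,z ∈ L. Then the brackets [x,y]_{β₁} := [β₁(x),y] and [x,y]_{β₂} := [β₂(x),y] are two compatible Leibniz brackets on L. -/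
variable {K : Type*} [Field K] {L : Type*} [AddCommGroup L] [Module K L]

/-- Compatibility of two binary brackets. -/
def LeibnizCompat (b₁ b₂ : L → L → L) : Prop :=
  ∀ x y z : L,
    b₂ (b₁ x y) z + b₁ (b₂ x y) z =
      b₂ x (b₁ y z) + b₁ x (b₂ y z) + b₂ (b₁ x z) y + b₁ (b₂ x z) y

/-- An averaging operator on a Leibniz algebra:
`β([β(x),y]) = [β(x),β(y)] = β([x,β(y)])`. -/
def IsAveraging (b : L → L → L) (β : L → L) : Prop :=
  ∀ x y : L, β (b (β x) y) = b (β x) (β y) ∧ β (b x (β y)) = b (β x) (β y)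

/-- Two compatible commuting injective averaging operators `β₁, β₂` on a Leibniz algebra
`(L,[-,-])` give two compatible Leibniz brackets `[x,y]_{βᵢ} := [βᵢ(x),y]`. -/
theorem averaging_compatible_leibniz (b : L →ₗ[K] L →ₗ[K] L)
    (hb : LeibnizId fun x y => b x y)
    (β₁ β₂ : L →ₗ[K] L)
    (hinj₁ : Function.Injective β₁) (hinj₂ : Function.Injective β₂)
    (hcomm : β₁ ∘ₗ β₂ = β₂ ∘ₗ β₁)
    (hav₁ : IsAveraging (fun x y => b x y) β₁)
    (hav₂ : IsAveraging (fun x y => b x y) β₂)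
    (hcompat : ∀ x y z : L,
      b (β₂ (b (β₁ x) y)) z + b (β₁ (b (β₂ x) y)) z =
        b (b (β₁ x) (β₂ y)) z + b (b (β₂ x) (β₁ y)) z) :
    LeibnizId (fun x y => b (β₁ x) y) ∧ LeibnizId (fun x y => b (β₂ x) y) ∧
      LeibnizCompat (fun x y => b (β₁ x) y) (fun x y => b (β₂ x) y) := by
  have e₁ : ∀ u y, b u (β₁ y) = b (β₁ u) y := fun u y =>
    hinj₁ (((hav₁ u y).2).trans ((hav₁ u y).1).symm)
  have e₂ : ∀ u y, b u (β₂ y) = b (β₂ u) y := fun u y =>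
    hinj₂ (((hav₂ u y).2).trans ((hav₂ u y).1).symm)
  have a₁ : ∀ x y, β₁ (b (β₁ x) y) = b (β₁ x) (β₁ y) := fun x y => (hav₁ x y).1
  have a₂ : ∀ x y, β₂ (b (β₂ x) y) = b (β₂ x) (β₂ y) := fun x y => (hav₂ x y).1
  have hb' : ∀ x y z, b (b x y) z = b x (b y z) + b (b x z) y := hb
  refine ⟨fun x y z => ?_, fun x y z => ?_, fun x y z => ?_⟩
  · show b (β₁ (b (β₁ x) y)) z = b (β₁ x) (b (β₁ y) z) + b (β₁ (b (β₁ x) z)) y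
    rw [a₁ x y, hb', e₁ (b (β₁ x) z) y]
  · show b (β₂ (b (β₂ x) y)) z = b (β₂ x) (b (β₂ y) z) + b (β₂ (b (β₂ x) z)) y
    rw [a₂ x y, hb', e₂ (b (β₂ x) z) y]
  · show b (β₂ (b (β₁ x) y)) z + b (β₁ (b (β₂ x) y)) z =
      b (β₂ x) (b (β₁ y) z) + b (β₁ x) (b (β₂ y) z)
        + b (β₂ (b (β₁ x) z)) y + b (β₁ (b (β₂ x) z)) y
    rw [hcompat, hb' (β₁ x) (β₂ y) z, hb' (β₂ x) (β₁ y) z,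
      e₂ (b (β₁ x) z) y, e₁ (b (β₂ x) z) y]
    abel
end

section
/- Let (L,[-,-]) be a Leibniz algebra over a field K, R : L → L a Rota-Baxter operator of weight 0, (M,l,r) a bimodule over L, and R_M : M → M a linear map such that l(R(x),R_M(m)) = R_M(l(R(x),m) + l(x,R_M(m))) and r(R_M(m),R(x)) = R_M(r(R_M(m),x) + r(m,R(x))) for all x ∈ L, m ∈ M. Define l'(x,m) := l(R(x),m) + l(x,R_M(m)) and r'(m,x) := r(R_M(m),x) + r(m,R(x)). Then (M,l',r') is a bimodule over the Leibniz algebra (L,[-,-]_R), where [x,y]_R := [R(x),y] + [x,R(y)]. -/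
variable {K : Type*} [Field K] {L : Type*} [AddCommGroup L] [Module K L]
variable {M : Type*} [AddCommGroup M] [Module K M]

/-- A bimodule `(M, l, r)` over a Leibniz algebra `(L, b)`. -/
def IsLeibnizBimodule (b : L → L → L) (l : L → M → M) (r : M → L → M) : Prop :=
  (∀ (x y : L) (m : M), l (b x y) m = l x (l y m) + r (l x m) y) ∧
  (∀ (x y : L) (m : M), r (l x m) y = l x (r m y) + l (b x y) m) ∧
  (∀ (x y : L) (m : M), r (r m x) y = r m (b x y) + r (r m y) x)

/-- A Rota-Baxter bimodule `(M, l, r, R_M)` over a Rota-Baxter Leibniz algebra `(L, [-,-], R)`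
of weight `0` gives rise to a bimodule `(M, l', r')` over the Leibniz algebra `(L, [-,-]_R)`,
where `l'(x,m) := l(R(x),m) + l(x,R_M(m))`, `r'(m,x) := r(R_M(m),x) + r(m,R(x))` and
`[x,y]_R := [R(x),y] + [x,R(y)]`. -/
theorem rotaBaxter_bimodule (b : L →ₗ[K] L →ₗ[K] L)
    (hb : LeibnizId fun x y => b x y)
    (R : L →ₗ[K] L)
    (hR : ∀ x y : L, b (R x) (R y) = R (b (R x) y + b x (R y)))
    (l : L →ₗ[K] M →ₗ[K] M) (r : M →ₗ[K] L →ₗ[K] M)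
    (hmod : IsLeibnizBimodule (fun x y => b x y)
      (fun x m => l x m) (fun m x => r m x))
    (RM : M →ₗ[K] M)
    (hl : ∀ (x : L) (m : M), l (R x) (RM m) = RM (l (R x) m + l x (RM m)))
    (hr : ∀ (x : L) (m : M), r (RM m) (R x) = RM (r (RM m) x + r m (R x))) :
    IsLeibnizBimodule (fun x y => b (R x) y + b x (R y))
      (fun x m => l (R x) m + l x (RM m))
      (fun m x => r (RM m) x + r m (R x)) := by
  obtain ⟨h1, h2, h3⟩ := hmod
  simp only at h1 h2 h3
  refine ⟨fun x y m => ?_, fun x y m => ?_, fun x y m => ?_⟩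
  · show l (R (b (R x) y + b x (R y))) m + l (b (R x) y + b x (R y)) (RM m) =
      l (R x) (l (R y) m + l y (RM m)) + l x (RM (l (R y) m + l y (RM m))) +
      (r (RM (l (R x) m + l x (RM m))) y + r (l (R x) m + l x (RM m)) (R y))
    rw [← hR, ← hl, ← hl]
    simp only [map_add, LinearMap.add_apply, h1]
    abel
  · show r (RM (l (R x) m + l x (RM m))) y + r (l (R x) m + l x (RM m)) (R y) =
      l (R x) (r (RM m) y + r m (R y)) + l x (RM (r (RM m) y + r m (R y))) +
      (l (R (b (R x) y + b x (R y))) m + l (b (R x) y + b x (R y)) (RM m))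
    rw [← hR, ← hl, ← hr]
    simp only [map_add, LinearMap.add_apply, h2]
    abel
  · show r (RM (r (RM m) x + r m (R x))) y + r (r (RM m) x + r m (R x)) (R y) =
      r (RM m) (b (R x) y + b x (R y)) + r m (R (b (R x) y + b x (R y))) +
      (r (RM (r (RM m) y + r m (R y))) x + r (r (RM m) y + r m (R y)) (R x))
    rw [← hR, ← hr, ← hr]
    simp only [map_add, LinearMap.add_apply]
    rw [h3 (R x) y, h3 x (R y), h3 (R x) (R y)]
    abel
end

section
/- Let L be a vector space over a field K with two trilinear brackets [-,-,-]₁ and [-,-,-]₂, each making L a ternary Leibniz algebra. Then the pair ([-,-,-]₁, [-,-,-]₂) satisfies the compatibility condition [[x,y,z]₁,t,u]₂ + [[x,y,z]₂,t,u]₁ = [x,y,[z,t,u]₁]₂ + [x,y,[z,t,u]₂]₁ + [x,[y,t,u]₁,z]₂ + [x,[y,t,u]₂,z]₁ + [[x,t,u]₁,y,z]₂ + [[x,t,u]₂,y,z]₁ (for all x,y,z,t,u) if and only if for all scalars k₁, k₂ ∈ K the bracket [x,y,z] := k₁[x,y,z]₁ + k₂[x,y,z]₂ makes L a ternary Leibniz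 algebra. -/
variable {K : Type*} [Field K] {L : Type*} [AddCommGroup L] [Module K L]

/-- Compatibility of two ternary brackets. -/
def TernaryCompat (b₁ b₂ : L → L → L → L) : Prop :=
  ∀ x y z t u : L,
    b₂ (b₁ x y z) t u + b₁ (b₂ x y z) t u =
      b₂ x y (b₁ z t u) + b₁ x y (b₂ z t u) + b₂ x (b₁ y t u) z + b₁ x (b₂ y t u) z +
        b₂ (b₁ x t u) y z + b₁ (b₂ x t u) y z

/-- Two ternary Leibniz brackets satisfy the compatibility condition if and only if every
linear combination `k₁[-,-,-]₁ + k₂[-,-,-]₂` is again a ternary Leibniz bracket. -/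
theorem ternary_compat_iff_linear_combination (t₁ t₂ : L →ₗ[K] L →ₗ[K] L →ₗ[K] L)
    (h₁ : TernaryLeibnizId fun x y z => t₁ x y z)
    (h₂ : TernaryLeibnizId fun x y z => t₂ x y z) :
    TernaryCompat (fun x y z => t₁ x y z) (fun x y z => t₂ x y z) ↔
      ∀ k₁ k₂ : K,
        TernaryLeibnizId fun x y z => k₁ • t₁ x y z + k₂ • t₂ x y z := by
  constructor
  · intro h k₁ k₂ x y z t u
    have a := h₁ x y z t u
    have b := h₂ x y z t u
    have c := h x y z t u
    simp only [map_add, map_smul, LinearMap.add_apply, LinearMap.smul_apply] at a b c ⊢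
    linear_combination (norm := module) (k₁ * k₁) • a + (k₂ * k₂) • b + (k₁ * k₂) • c
  · intro h x y z t u
    have a := h₁ x y z t u
    have b := h₂ x y z t u
    have c := h 1 1 x y z t u
    simp only [map_add, one_smul, LinearMap.add_apply] at a b c ⊢
    linear_combination (norm := module) c - a - b
end

section
/- Let (L,[-,-,-]) be a ternary Leibniz algebra over a field K and β : L → L an injective averaging operator. Then the new bracket [x,y,z]_β := [β(x),β(y),z] makes L into a ternary Leibniz algebra. -/
variable {K : Type*} [Field K] {L : Type*} [AddCommGroup L] [Module K L]

/-- An averaging operator on a ternary Leibniz algebra. -/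
def IsTernaryAveraging (t : L → L → L → L) (β : L → L) : Prop :=
  ∀ x y z : L,
    β (t (β x) (β y) z) = t (β x) (β y) (β z) ∧
      β (t (β x) y (β z)) = t (β x) (β y) (β z) ∧
      β (t x (β y) (β z)) = t (β x) (β y) (β z)

/-- If `β` is an injective averaging operator on a ternary Leibniz algebra `(L, [-,-,-])`,
then `[x,y,z]_β := [β(x),β(y),z]` makes `L` into a ternary Leibniz algebra. -/
theorem averaging_ternaryLeibniz (t : L →ₗ[K] L →ₗ[K] L →ₗ[K] L)
    (ht : TernaryLeibnizId fun x y z => t x y z)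
    (β : L →ₗ[K] L) (hinj : Function.Injective β)
    (hav : IsTernaryAveraging (fun x y z => t x y z) β) :
    TernaryLeibnizId fun x y z => t (β x) (β y) z := by
  intro x y z a c
  have h : ∀ x y z : L, β (t (β x) (β y) z) = t (β x) (β y) (β z) :=
    fun x y z => (hav x y z).1
  apply hinj
  have e := ht (β x) (β y) (β z) (β a) (β c)
  have e1 := h (t (β x) (β y) z) a c
  have e2 := h x y (t (β z) (β a) c)
  have e3 := h x (t (β y) (β a) c) z
  have e4 := h (t (β x) (β a) c) y z
  beta_reduce at e ⊢
  rw [map_add, map_add, e1, e2, e3, e4, h, h, h, h]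
  exact e
end

section
/- Let L be a vector space over a field K carrying two ternary Leibniz brackets [-,-,-]₁ and [-,-,-]₂, and let β₁ be an injective averaging operator for [-,-,-]₁ and β₂ an injective averaging operator for [-,-,-]₂, such that β₁∘β₂ = β₂∘β₁ and [β₁(x),β₁(y),β₁(z)]₁ = [β₂(x),β₂(y),β₂(z)]₂ for all x,y,z ∈ L. Then the brackets [x,y,z]_{β₁} := [β₁(x),β₁(y),z]₁ and [x,y,z]_{β₂} := [β₂(x),β₂(y),z]₂ are two compatible ternary Leibniz brackets on L. -/
variable {K : Type*} [Field K] {L : Type*} [AddCommGroup L] [Module K L]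

theorem avg_leib_aux (t : L →ₗ[K] L →ₗ[K] L →ₗ[K] L)
    (h : TernaryLeibnizId fun x y z => t x y z) (β : L →ₗ[K] L)
    (hinj : Function.Injective β)
    (hav : IsTernaryAveraging (fun x y z => t x y z) β) :
    TernaryLeibnizId (fun x y z => t (β x) (β y) z) := by
  have e : ∀ x y z, β (t (β x) (β y) z) = t (β x) (β y) (β z) := fun x y z => (hav x y z).1
  intro x y z a b
  apply hinj
  simp only [map_add]
  rw [e (t (β x) (β y) z) a b, e x y (t (β z) (β a) b), e x (t (β y) (β a) b) z,
    e (t (β x) (β a) b) y z, e, e, e, e]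
  exact h (β x) (β y) (β z) (β a) (β b)

theorem avg_mixed_aux (t₁ t₂ : L →ₗ[K] L →ₗ[K] L →ₗ[K] L) (β₁ β₂ : L →ₗ[K] L)
    (h : TernaryLeibnizId (fun x y z => t₁ (β₁ x) (β₁ y) z))
    (hinj₂ : Function.Injective β₂)
    (hav₁ : IsTernaryAveraging (fun x y z => t₁ x y z) β₁)
    (hav₂ : IsTernaryAveraging (fun x y z => t₂ x y z) β₂)
    (heq : ∀ x y z : L, t₁ (β₁ x) (β₁ y) (β₁ z) = t₂ (β₂ x) (β₂ y) (β₂ z))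
    (x y z a b : L) :
    t₂ (β₂ (t₁ (β₁ x) (β₁ y) z)) (β₂ a) b =
      t₂ (β₂ x) (β₂ y) (t₁ (β₁ z) (β₁ a) b) + t₂ (β₂ x) (β₂ (t₁ (β₁ y) (β₁ a) b)) z
        + t₂ (β₂ (t₁ (β₁ x) (β₁ a) b)) (β₂ y) z := by
  have e : ∀ x y z, β₂ (t₂ (β₂ x) (β₂ y) z) = β₁ (t₁ (β₁ x) (β₁ y) z) := fun x y z =>
    ((hav₂ x y z).1.trans (heq x y z).symm).trans (hav₁ x y z).1.symm
  apply hinj₂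
  rw [map_add, map_add, e, e, e, e, ← map_add, ← map_add]
  exact congrArg β₁ (h x y z a b)

/-- Let `β₁` and `β₂` be commuting injective averaging operators for two ternary Leibniz
brackets `[-,-,-]₁` and `[-,-,-]₂` on `L` with
`[β₁(x),β₁(y),β₁(z)]₁ = [β₂(x),β₂(y),β₂(z)]₂`. Then `[x,y,z]_{βᵢ} := [βᵢ(x),βᵢ(y),z]ᵢ`
are two compatible ternary Leibniz brackets on `L`. -/
theorem averaging_compatible_ternaryLeibniz (t₁ t₂ : L →ₗ[K] L →ₗ[K] L →ₗ[K] L)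
    (h₁ : TernaryLeibnizId fun x y z => t₁ x y z)
    (h₂ : TernaryLeibnizId fun x y z => t₂ x y z)
    (β₁ β₂ : L →ₗ[K] L)
    (hinj₁ : Function.Injective β₁) (hinj₂ : Function.Injective β₂)
    (hav₁ : IsTernaryAveraging (fun x y z => t₁ x y z) β₁)
    (hav₂ : IsTernaryAveraging (fun x y z => t₂ x y z) β₂)
    (hcomm : β₁ ∘ₗ β₂ = β₂ ∘ₗ β₁)
    (heq : ∀ x y z : L, t₁ (β₁ x) (β₁ y) (β₁ z) = t₂ (β₂ x) (β₂ y) (β₂ z)) :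
    TernaryLeibnizId (fun x y z => t₁ (β₁ x) (β₁ y) z) ∧
      TernaryLeibnizId (fun x y z => t₂ (β₂ x) (β₂ y) z) ∧
      TernaryCompat (fun x y z => t₁ (β₁ x) (β₁ y) z)
        (fun x y z => t₂ (β₂ x) (β₂ y) z) := by
  have l₁ := avg_leib_aux t₁ h₁ β₁ hinj₁ hav₁
  have l₂ := avg_leib_aux t₂ h₂ β₂ hinj₂ hav₂
  refine ⟨l₁, l₂, ?_⟩
  intro x y z a b
  have m₁ := avg_mixed_aux t₁ t₂ β₁ β₂ l₁ hinj₂ hav₁ hav₂ heq x y z a b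
  have m₂ := avg_mixed_aux t₂ t₁ β₂ β₁ l₂ hinj₁ hav₂ hav₁ (fun x y z => (heq x y z).symm) x y z a b
  simp only
  rw [m₁, m₂]
  abel
end

section
/- Let (L,[-,-,-]) be a ternary Leibniz algebra over a field K and R : L → L a Rota-Baxter operator of weight 0, i.e. [R(x),R(y),R(z)] = R([R(x),R(y),z] + [R(x),y,R(z)] + [x,R(y),R(z)]) for all x,y,z ∈ L. Then the bracket {x,y,z} := [R(x),R(y),z] + [R(x),y,R(z)] + [x,R(y),R(z)] makes L into a ternary Leibniz algebra. -/
variable {K : Type*} [Field K] {L : Type*} [AddCommGroup L] [Module K L]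

/-- If `R` is a Rota-Baxter operator of weight `0` on a ternary Leibniz algebra
`(L, [-,-,-])`, then `{x,y,z} := [R(x),R(y),z] + [R(x),y,R(z)] + [x,R(y),R(z)]` makes `L`
into a ternary Leibniz algebra. -/
theorem rotaBaxter_ternaryLeibniz (t : L →ₗ[K] L →ₗ[K] L →ₗ[K] L)
    (ht : TernaryLeibnizId fun x y z => t x y z)
    (R : L →ₗ[K] L)
    (hR : ∀ x y z : L,
      t (R x) (R y) (R z) =
        R (t (R x) (R y) z + t (R x) y (R z) + t x (R y) (R z))) :
    TernaryLeibnizId fun x y z =>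
      t (R x) (R y) z + t (R x) y (R z) + t x (R y) (R z) := by
  intro x y z v w
  have h : ∀ x y z v w : L, t (t x y z) v w
      = t x y (t z v w) + t x (t y v w) z + t (t x v w) y z := ht
  simp only [← hR]
  simp only [map_add, LinearMap.add_apply]
  rw [h (R x) (R y) (R z) (R v) w, h (R x) (R y) (R z) v (R w),
    h (R x) (R y) z (R v) (R w), h (R x) y (R z) (R v) (R w), h x (R y) (R z) (R v) (R w)]
  abel
end
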